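/- Let y ∈ {-1,1}, μ ∈ ℝ, σ > 0, z = yμ/√(1+σ²), η = Φ(z). The variance of the tilted density p(x) = η⁻¹ Φ(y x) φ(x; μ, σ²) equals σ̂² = σ² − (σ⁴ φ(z)/((1+σ²) η)) · (z + φ(z)/η). -/

import Mathlib

open MeasureTheory

noncomputable def stdPdf (x : ℝ) : ℝ :=
  (Real.sqrt (2 * Real.pi))⁻¹ * Real.exp (-x ^ 2 / 2)

noncomputable def stdCdf (x : ℝ) : ℝ := ∫ u in Set.Iic x, stdPdf u

noncomputable def gPdf (μ σ x : ℝ) : ℝ :=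
  (σ * Real.sqrt (2 * Real.pi))⁻¹ * Real.exp (-(x - μ) ^ 2 / (2 * σ ^ 2))

section ProbitGaussian

open ProbabilityTheory

lemma gPdf_eq_gaussianPDFReal (μ : ℝ) {σ : ℝ} (hσ : 0 ≤ σ) (x : ℝ) :
    gPdf μ σ x = gaussianPDFReal μ (.mk (σ ^ 2) (sq_nonneg σ)) x := by
  simp only [gPdf, gaussianPDFReal, NNReal.coe_mk]
  rw [Real.sqrt_mul (by positivity) (σ ^ 2), Real.sqrt_sq hσ, mul_comm σ]

lemma stdPdf_eq_gaussianPDFReal (x : ℝ) : stdPdf x = gaussianPDFReal 0 1 x := by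
  simp [stdPdf, gaussianPDFReal]

lemma stdCdf_eq_real_Iic (a : ℝ) : stdCdf a = (gaussianReal 0 1).real (Set.Iic a) := by
  rw [measureReal_def, gaussianReal_apply_eq_integral _ one_ne_zero, ENNReal.toReal_ofReal]
  · simp only [stdCdf, stdPdf_eq_gaussianPDFReal]
  · exact integral_nonneg fun x => gaussianPDFReal_nonneg _ _ x

lemma continuous_stdPdf : Continuous stdPdf := by
  unfold stdPdf
  fun_prop

lemma integrable_stdPdf : Integrable stdPdf := by
  rw [funext stdPdf_eq_gaussianPDFReal]
  exact integrable_gaussianPDFReal 0 1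

lemma hasDerivAt_stdPdf (x : ℝ) : HasDerivAt stdPdf (-x * stdPdf x) x := by
  have h := (((hasDerivAt_id x).pow 2).neg.div_const 2).exp.const_mul (Real.sqrt (2 * Real.pi))⁻¹
  refine h.congr_deriv ?_
  simp [stdPdf]
  ring

lemma hasDerivAt_stdCdf (x : ℝ) : HasDerivAt stdCdf (stdPdf x) x := by
  have h : stdCdf = fun a => (∫ u in (0 : ℝ)..a, stdPdf u) + stdCdf 0 := by
    funext a
    rw [← intervalIntegral.integral_Iic_sub_Iic integrable_stdPdf.integrableOn
      integrable_stdPdf.integrableOn]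
    simp [stdCdf]
  rw [h]
  exact (intervalIntegral.integral_hasDerivAt_right integrable_stdPdf.intervalIntegrable
    continuous_stdPdf.stronglyMeasurable.stronglyMeasurableAtFilter
    continuous_stdPdf.continuousAt).add_const _

lemma continuous_stdCdf : Continuous stdCdf :=
  continuous_iff_continuousAt.2 fun x => (hasDerivAt_stdCdf x).continuousAt

lemma norm_stdCdf_le_one (x : ℝ) : ‖stdCdf x‖ ≤ 1 := by
  rw [stdCdf_eq_real_Iic, Real.norm_of_nonneg measureReal_nonneg]
  exact measureReal_le_one

lemma norm_stdPdf_le (x : ℝ) : ‖stdPdf x‖ ≤ (Real.sqrt (2 * Real.pi))⁻¹ := by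
  rw [stdPdf, Real.norm_of_nonneg (by positivity)]
  refine mul_le_of_le_one_right (by positivity) (Real.exp_le_one_iff.2 ?_)
  nlinarith [sq_nonneg x]

lemma stdCdf_pos (x : ℝ) : 0 < stdCdf x := by
  rw [stdCdf_eq_real_Iic, measureReal_def]
  refine ENNReal.toReal_pos (fun h => ?_) (measure_ne_top _ _)
  have := gaussianReal_absolutelyContinuous' 0 (one_ne_zero (α := NNReal)) h
  simp at this

lemma hasDerivAt_gPdf (μ : ℝ) {σ : ℝ} (hσ : 0 < σ) (x : ℝ) :
    HasDerivAt (gPdf μ σ) (-(x - μ) / σ ^ 2 * gPdf μ σ x) x := by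
  have h := (((((hasDerivAt_id x).sub_const μ).pow 2).neg.div_const
    (2 * σ ^ 2)).exp.const_mul (σ * Real.sqrt (2 * Real.pi))⁻¹)
  refine h.congr_deriv ?_
  simp [gPdf]
  field_simp
  ring

lemma integrable_pow_mul_gPdf (μ : ℝ) {σ : ℝ} (hσ : 0 < σ) (k : ℕ) :
    Integrable fun x => (x - μ) ^ k * gPdf μ σ x := by
  have h := (integrable_rpow_mul_exp_neg_mul_sq (b := (2 * σ ^ 2)⁻¹) (by positivity)
    (s := k) (by linarith [k.cast_nonneg (α := ℝ)])).comp_sub_right μ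
  refine (h.const_mul (σ * Real.sqrt (2 * Real.pi))⁻¹).congr (.of_forall fun x => ?_)
  simp only [Real.rpow_natCast, gPdf]
  rw [show -(2 * σ ^ 2)⁻¹ * (x - μ) ^ 2 = -(x - μ) ^ 2 / (2 * σ ^ 2) by ring]
  ring

lemma integral_gPdf (μ : ℝ) {σ : ℝ} (hσ : 0 < σ) : ∫ x, gPdf μ σ x = 1 := by
  simp only [gPdf_eq_gaussianPDFReal μ hσ.le]
  refine integral_gaussianPDFReal_eq_one μ fun h => ?_
  have := congrArg NNReal.toReal h
  simp [hσ.ne'] at this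

lemma integrable_stdCdf_mul_pow_mul_gPdf (y μ : ℝ) {σ : ℝ} (hσ : 0 < σ) (k : ℕ) :
    Integrable fun x => stdCdf (y * x) * ((x - μ) ^ k * gPdf μ σ x) :=
  (integrable_pow_mul_gPdf μ hσ k).bdd_mul
    (continuous_stdCdf.comp (continuous_const_mul y)).aestronglyMeasurable
    (.of_forall fun x => norm_stdCdf_le_one (y * x))

lemma integrable_stdPdf_mul_pow_mul_gPdf (μ : ℝ) {σ : ℝ} (hσ : 0 < σ) (k : ℕ) :
    Integrable fun x => stdPdf x * ((x - μ) ^ k * gPdf μ σ x) :=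
  (integrable_pow_mul_gPdf μ hσ k).bdd_mul continuous_stdPdf.aestronglyMeasurable
    (.of_forall norm_stdPdf_le)

lemma stdPdf_mul_gPdf (μ : ℝ) {σ : ℝ} (hσ : 0 < σ) (x : ℝ) :
    stdPdf x * gPdf μ σ x = stdPdf (μ / Real.sqrt (1 + σ ^ 2)) / Real.sqrt (1 + σ ^ 2) *
      gPdf (μ / (1 + σ ^ 2)) (σ / Real.sqrt (1 + σ ^ 2)) x := by
  have hs : 0 < Real.sqrt (1 + σ ^ 2) := by positivity
  have hs2 : Real.sqrt (1 + σ ^ 2) ^ 2 = 1 + σ ^ 2 := Real.sq_sqrt (by positivity)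
  have hexp : Real.exp (-x ^ 2 / 2) * Real.exp (-(x - μ) ^ 2 / (2 * σ ^ 2)) =
      Real.exp (-(μ / Real.sqrt (1 + σ ^ 2)) ^ 2 / 2) *
        Real.exp (-(x - μ / (1 + σ ^ 2)) ^ 2 / (2 * (σ / Real.sqrt (1 + σ ^ 2)) ^ 2)) := by
    rw [← Real.exp_add, ← Real.exp_add, div_pow, div_pow, hs2]
    congr 1
    field_simp
    ring
  calc stdPdf x * gPdf μ σ x = (Real.sqrt (2 * Real.pi))⁻¹ * (σ * Real.sqrt (2 * Real.pi))⁻¹ *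
        (Real.exp (-x ^ 2 / 2) * Real.exp (-(x - μ) ^ 2 / (2 * σ ^ 2))) := by
        unfold stdPdf gPdf
        ring
    _ = _ := by
        rw [hexp]
        unfold stdPdf gPdf
        field_simp

lemma integral_stdPdf_mul_gPdf (μ : ℝ) {σ : ℝ} (hσ : 0 < σ) :
    ∫ x, stdPdf x * gPdf μ σ x =
      stdPdf (μ / Real.sqrt (1 + σ ^ 2)) / Real.sqrt (1 + σ ^ 2) := by
  simp only [stdPdf_mul_gPdf μ hσ]
  rw [integral_const_mul, integral_gPdf _ (by positivity), mul_one]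

lemma integral_stdPdf_mul_sub_mul_gPdf (μ : ℝ) {σ : ℝ} (hσ : 0 < σ) :
    ∫ x, stdPdf x * ((x - μ) * gPdf μ σ x) =
      -(μ * σ ^ 2 / (1 + σ ^ 2)) * ∫ x, stdPdf x * gPdf μ σ x := by
  have h0 : Integrable fun x => stdPdf x * gPdf μ σ x := by
    simpa using integrable_stdPdf_mul_pow_mul_gPdf μ hσ 0
  have h1 : Integrable fun x => stdPdf x * ((x - μ) * gPdf μ σ x) := by
    simpa using integrable_stdPdf_mul_pow_mul_gPdf μ hσ 1
  have hint := (h0.const_mul (-μ)).add (h1.const_mul (-((1 + σ ^ 2) / σ ^ 2)))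
  have hz := integral_eq_zero_of_hasDerivAt_of_integrable
    (fun x => ((hasDerivAt_stdPdf x).mul (hasDerivAt_gPdf μ hσ x)).congr_deriv
      (g' := -μ * (stdPdf x * gPdf μ σ x) +
        -((1 + σ ^ 2) / σ ^ 2) * (stdPdf x * ((x - μ) * gPdf μ σ x)))
      (by field_simp; ring)) hint h0
  rw [integral_add (h0.const_mul _) (h1.const_mul _), integral_const_mul,
    integral_const_mul] at hz
  field_simp at hz ⊢
  linarith

lemma hasDerivAt_stdCdf_const_mul (y x : ℝ) :
    HasDerivAt (fun x => stdCdf (y * x)) (y * stdPdf (y * x)) x := by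
  have h := (hasDerivAt_stdCdf (y * x)).comp x ((hasDerivAt_id x).const_mul y)
  exact h.congr_deriv (by ring)

lemma stdPdf_sign_mul {y : ℝ} (hy : y ^ 2 = 1) (x : ℝ) : stdPdf (y * x) = stdPdf x := by
  simp [stdPdf, mul_pow, hy]

lemma integral_stdCdf_mul_sub_mul_gPdf {y : ℝ} (hy : y ^ 2 = 1) (μ : ℝ) {σ : ℝ} (hσ : 0 < σ) :
    ∫ x, stdCdf (y * x) * ((x - μ) * gPdf μ σ x) =
      σ ^ 2 * y * ∫ x, stdPdf x * gPdf μ σ x := by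
  have hp : Integrable fun x => stdPdf x * gPdf μ σ x := by
    simpa using integrable_stdPdf_mul_pow_mul_gPdf μ hσ 0
  have h0 : Integrable fun x => stdCdf (y * x) * gPdf μ σ x := by
    simpa using integrable_stdCdf_mul_pow_mul_gPdf y μ hσ 0
  have h1 : Integrable fun x => stdCdf (y * x) * ((x - μ) * gPdf μ σ x) := by
    simpa using integrable_stdCdf_mul_pow_mul_gPdf y μ hσ 1
  have hint := (hp.const_mul y).add (h1.const_mul (-(σ ^ 2)⁻¹))
  have hz := integral_eq_zero_of_hasDerivAt_of_integrable
    (fun x => ((hasDerivAt_stdCdf_const_mul y x).mul (hasDerivAt_gPdf μ hσ x)).congr_deriv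
      (g' := y * (stdPdf x * gPdf μ σ x) +
        -(σ ^ 2)⁻¹ * (stdCdf (y * x) * ((x - μ) * gPdf μ σ x)))
      (by rw [stdPdf_sign_mul hy]; field_simp)) hint h0
  rw [integral_add (hp.const_mul _) (h1.const_mul _), integral_const_mul,
    integral_const_mul] at hz
  field_simp at hz ⊢
  linarith

lemma integral_stdCdf_mul_sub_sq_mul_gPdf {y : ℝ} (hy : y ^ 2 = 1) (μ : ℝ) {σ : ℝ}
    (hσ : 0 < σ) :
    ∫ x, stdCdf (y * x) * ((x - μ) ^ 2 * gPdf μ σ x) =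
      σ ^ 2 * ((∫ x, stdCdf (y * x) * gPdf μ σ x) +
        y * ∫ x, stdPdf x * ((x - μ) * gPdf μ σ x)) := by
  have hp : Integrable fun x => stdPdf x * ((x - μ) * gPdf μ σ x) := by
    simpa using integrable_stdPdf_mul_pow_mul_gPdf μ hσ 1
  have h0 : Integrable fun x => stdCdf (y * x) * gPdf μ σ x := by
    simpa using integrable_stdCdf_mul_pow_mul_gPdf y μ hσ 0
  have h1 : Integrable fun x => stdCdf (y * x) * ((x - μ) * gPdf μ σ x) := by
    simpa using integrable_stdCdf_mul_pow_mul_gPdf y μ hσ 1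
  have h2 := integrable_stdCdf_mul_pow_mul_gPdf y μ hσ 2
  have hint := (h0.fun_add (hp.const_mul y)).fun_add (h2.const_mul (-(σ ^ 2)⁻¹))
  have hz := integral_eq_zero_of_hasDerivAt_of_integrable
    (fun x => ((hasDerivAt_stdCdf_const_mul y x).mul
      (((hasDerivAt_id x).sub_const μ).mul (hasDerivAt_gPdf μ hσ x))).congr_deriv
      (g' := stdCdf (y * x) * gPdf μ σ x + y * (stdPdf x * ((x - μ) * gPdf μ σ x)) +
        -(σ ^ 2)⁻¹ * (stdCdf (y * x) * ((x - μ) ^ 2 * gPdf μ σ x)))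
      (by simp only [stdPdf_sign_mul hy, Pi.mul_apply, id]; field_simp; ring)) hint h1
  rw [integral_add (h0.fun_add (hp.const_mul y)) (h2.const_mul _), integral_const_mul,
    integral_add h0 (hp.const_mul y), integral_const_mul] at hz
  field_simp at hz ⊢
  linarith

lemma real_Iic_zero_gaussianReal (m : ℝ) {s : ℝ} (hs : 0 < s) :
    (gaussianReal m (.mk (s ^ 2) (sq_nonneg s))).real (Set.Iic 0) = stdCdf (-m / s) := by
  have h : gaussianReal m (.mk (s ^ 2) (sq_nonneg s)) =
      ((gaussianReal 0 1).map (s * ·)).map (· + m) := by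
    rw [gaussianReal_map_const_mul, gaussianReal_map_add_const]
    simp
  rw [h, map_measureReal_apply (by fun_prop) measurableSet_Iic,
    map_measureReal_apply (by fun_prop) (measurableSet_Iic.preimage (by fun_prop)),
    stdCdf_eq_real_Iic]
  congr 1
  ext x
  simp only [Set.mem_preimage, Set.mem_Iic]
  rw [le_div_iff₀ hs]
  constructor <;> intro h <;> linarith

lemma integral_stdCdf_mul_gPdf {y : ℝ} (hy : y ^ 2 = 1) (μ : ℝ) {σ : ℝ} (hσ : 0 < σ) :
    ∫ x, stdCdf (y * x) * gPdf μ σ x = stdCdf (y * μ / Real.sqrt (1 + σ ^ 2)) := by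
  have hv : NNReal.mk (σ ^ 2) (sq_nonneg σ) ≠ 0 := fun h => by
    have := congrArg NNReal.toReal h
    simp [hσ.ne'] at this
  have hconv : gaussianReal (-(y * μ))
        (.mk (Real.sqrt (1 + σ ^ 2) ^ 2) (sq_nonneg _)) =
      ((gaussianReal μ (.mk (σ ^ 2) (sq_nonneg σ))).map (-y * ·)).conv (gaussianReal 0 1) := by
    rw [gaussianReal_map_const_mul, gaussianReal_conv_gaussianReal]
    congr 1
    · ring
    · ext
      simpa [hy, add_comm] using Real.sq_sqrt (show 0 ≤ 1 + σ ^ 2 by positivity)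
  have hmeas : Measurable fun x : ℝ => gaussianReal 0 1 (Set.Iic (y * x)) :=
    (Monotone.measurable fun a b hab => measure_mono (Set.Iic_subset_Iic.2 hab)).comp
      (measurable_const_mul y)
  have key : gaussianReal (-(y * μ))
        (.mk (Real.sqrt (1 + σ ^ 2) ^ 2) (sq_nonneg _)) (Set.Iic 0) =
      ∫⁻ x, gaussianReal 0 1 (Set.Iic (y * x)) ∂gaussianReal μ (.mk (σ ^ 2) (sq_nonneg σ)) := by
    have hind : Measurable ((Set.Iic (0 : ℝ)).indicator (1 : ℝ → ENNReal)) :=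
      measurable_one.indicator measurableSet_Iic
    rw [hconv, ← lintegral_indicator_one measurableSet_Iic, Measure.lintegral_conv hind,
      lintegral_map (Measurable.lintegral_prod_right' (f := fun q : ℝ × ℝ =>
        (Set.Iic (0 : ℝ)).indicator (1 : ℝ → ENNReal) (q.1 + q.2)) (by fun_prop)) (by fun_prop)]
    refine lintegral_congr fun x => ?_
    rw [← lintegral_indicator_one measurableSet_Iic]
    refine lintegral_congr fun w => ?_
    simp only [Set.indicator_apply, Set.mem_Iic]
    congr 1
    rw [eq_iff_iff]
    constructor <;> intro h <;> linarith
  have hz := real_Iic_zero_gaussianReal (-(y * μ)) (s := Real.sqrt (1 + σ ^ 2)) (by positivity)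
  rw [neg_neg] at hz
  rw [← hz, measureReal_def, key, ← integral_toReal hmeas.aemeasurable
    (.of_forall fun x => measure_lt_top _ _), integral_gaussianReal_eq_integral_smul hv]
  refine integral_congr_ae (.of_forall fun x => ?_)
  simp only [stdCdf_eq_real_Iic, gPdf_eq_gaussianPDFReal μ hσ.le, smul_eq_mul, measureReal_def]
  ring

end ProbitGaussian

/-- Variance of the probit-tilted Gaussian `p(x) = η⁻¹ Φ(y x) φ(x; μ, σ²)` equals
`σ̂² = σ² − (σ⁴ φ(z)/((1+σ²) η)) (z + φ(z)/η)` where `z = yμ/√(1+σ²)`, `η = Φ(z)`. -/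
theorem stmt3 (y μ σ : ℝ) (hy : y = -1 ∨ y = 1) (hσ : 0 < σ)
    (z : ℝ) (hz : z = y * μ / Real.sqrt (1 + σ ^ 2))
    (η : ℝ) (hη : η = stdCdf z)
    (p : ℝ → ℝ) (hp : p = fun x => η⁻¹ * stdCdf (y * x) * gPdf μ σ x)
    (μhat : ℝ) (hμhat : μhat = ∫ x : ℝ, x * p x) :
    (∫ x : ℝ, (x - μhat) ^ 2 * p x) =
      σ ^ 2 - σ ^ 4 * stdPdf z / ((1 + σ ^ 2) * η) * (z + stdPdf z / η) := by
  have hy2 : y ^ 2 = 1 := by rcases hy with rfl | rfl <;> norm_num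
  have hs2 : Real.sqrt (1 + σ ^ 2) ^ 2 = 1 + σ ^ 2 := Real.sq_sqrt (by positivity)
  have hs : 0 < Real.sqrt (1 + σ ^ 2) := by positivity
  have hη0 : 0 < η := hη ▸ stdCdf_pos z
  have h0 : Integrable fun x => stdCdf (y * x) * gPdf μ σ x := by
    simpa using integrable_stdCdf_mul_pow_mul_gPdf y μ hσ 0
  have h1 : Integrable fun x => stdCdf (y * x) * ((x - μ) * gPdf μ σ x) := by
    simpa using integrable_stdCdf_mul_pow_mul_gPdf y μ hσ 1
  have h2 := integrable_stdCdf_mul_pow_mul_gPdf y μ hσ 2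
  have hN : ∫ x, stdPdf x * gPdf μ σ x = stdPdf z / Real.sqrt (1 + σ ^ 2) := by
    rw [integral_stdPdf_mul_gPdf μ hσ, hz, mul_div_assoc, stdPdf_sign_mul hy2]
  have hI0 : ∫ x, stdCdf (y * x) * gPdf μ σ x = η := by
    rw [integral_stdCdf_mul_gPdf hy2 μ hσ, hη, hz]
  have hI1 := integral_stdCdf_mul_sub_mul_gPdf hy2 μ hσ
  have hI2 := integral_stdCdf_mul_sub_sq_mul_gPdf hy2 μ hσ
  rw [hN] at hI1
  rw [integral_stdPdf_mul_sub_mul_gPdf μ hσ, hN, hI0] at hI2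
  have hmean : μhat = μ + η⁻¹ * (σ ^ 2 * y * (stdPdf z / Real.sqrt (1 + σ ^ 2))) := by
    have hx : ∀ x, x * p x = η⁻¹ * (stdCdf (y * x) * ((x - μ) * gPdf μ σ x)) +
        η⁻¹ * μ * (stdCdf (y * x) * gPdf μ σ x) := fun x => by rw [hp]; ring
    rw [hμhat]
    simp only [hx]
    rw [integral_add (h1.const_mul _) (h0.const_mul _), integral_const_mul,
      integral_const_mul, hI0, hI1]
    field_simp
    ring
  have hx : ∀ x, (x - μhat) ^ 2 * p x =
      η⁻¹ * (stdCdf (y * x) * ((x - μ) ^ 2 * gPdf μ σ x)) +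
      η⁻¹ * (-2 * (μhat - μ)) * (stdCdf (y * x) * ((x - μ) * gPdf μ σ x)) +
      η⁻¹ * (μhat - μ) ^ 2 * (stdCdf (y * x) * gPdf μ σ x) := fun x => by rw [hp]; ring
  simp only [hx]
  rw [integral_add ((h2.const_mul _).fun_add (h1.const_mul _)) (h0.const_mul _),
    integral_add (h2.const_mul _) (h1.const_mul _), integral_const_mul, integral_const_mul,
    integral_const_mul, hI0, hI1, hI2, hmean]
  have hμz : y * μ = z * Real.sqrt (1 + σ ^ 2) := by rw [hz]; field_simp
  generalize stdPdf z = f at *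
  generalize Real.sqrt (1 + σ ^ 2) = s at *
  rw [← hs2]
  have e : y * (-(μ * σ ^ 2 / s ^ 2) * (f / s)) = -(z * σ ^ 2 * f / s ^ 2) := by
    calc _ = -((y * μ) * σ ^ 2 * f / (s ^ 2 * s)) := by ring
      _ = _ := by rw [hμz]; field_simp
  rw [e]
  field_simp
  ring_nf
  simp only [hy2]
  ring
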